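/- arXiv:gr-qc/0010008 — 3 statements merged into one kernel-verified Lean document; each statement's English description precedes it below -/
import Mathlib

section
/- For each fixed even integer m ≥ 2, the limit as N → ∞ along even integers of C₀(N+2,m)/C₀(N,m) exists and equals 27/2; consequently (1/N)·log C₀(N,m) converges to (1/2)·log(27/2) = log(3·√(3/2)) as N → ∞ along even integers. -/
open Filter Real MeasureTheory

/-- Number of rooted quasitriangulations of a sphere with a hole with `N` triangles and
`m` boundary edges (Goulden–Jackson), with `j = (N - m)/2`. -/
noncomputable def C0 (N m : ℕ) : ℝ :=
  (2 : ℝ) ^ ((N - m) / 2 + 2) * (Nat.factorial (2 * m + 3 * ((N - m) / 2) - 1) : ℝ) *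
    (Nat.factorial (2 * m - 3) : ℝ) /
    ((Nat.factorial ((N - m) / 2 + 1) : ℝ) * (Nat.factorial (2 * m + 2 * ((N - m) / 2)) : ℝ) *
      ((Nat.factorial (m - 2) : ℝ)) ^ 2)

/-- The filter "N → ∞ along even integers". -/
def evenAtTop : Filter ℕ := Filter.atTop ⊓ Filter.principal {N | Even N}

/-!
Along `N = m + 2j` the argument of each factorial in `C₀` is affine in `j`, so the ratio
of consecutive terms is an explicit rational function of `j`, with limit
`2 · 3 · (3/2) · (3/2) = 27/2`. The logarithms of these ratios telescope, and Cesàro averaging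
turns the limit of the ratios into the exponential growth rate.
-/

open scoped Topology

/-- The filter "`N → ∞` along the integers congruent to `a` modulo `d`", which extends `evenAtTop`
to arbitrary residue classes. -/
def modEqAtTop (d a : ℕ) : Filter ℕ := atTop ⊓ 𝓟 {N | N ≡ a [MOD d]}

theorem evenAtTop_eq_modEqAtTop {a : ℕ} (ha : Even a) : evenAtTop = modEqAtTop 2 a := by
  have heven : {N | Even N} = {N | N ≡ a [MOD 2]} := by
    ext N
    simp only [Set.mem_ofPred_eq, Nat.even_iff, Nat.ModEq, Nat.even_iff.mp ha]
  rw [evenAtTop, modEqAtTop, heven]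

theorem modEqAtTop_eq_map {d : ℕ} (hd : 0 < d) (a : ℕ) :
    modEqAtTop d a = map (fun j ↦ a + d * j) atTop := by
  have hcomap : comap (fun j ↦ a + d * j) atTop = atTop :=
    comap_embedding_atTop (fun i j ↦ by simp [hd])
      fun N ↦ ⟨N, (Nat.le_mul_of_pos_left N hd).trans (Nat.le_add_left _ a)⟩
  have hrange : Set.range (fun j ↦ a + d * j) = Set.Ici a ∩ {N | N ≡ a [MOD d]} := by
    ext N
    constructor
    · rintro ⟨j, rfl⟩
      exact ⟨Nat.le_add_right _ _, by simp [Nat.ModEq]⟩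
    · rintro ⟨hle, hmod⟩
      obtain ⟨j, hj⟩ := (Nat.modEq_iff_dvd' hle).mp hmod.symm
      exact ⟨j, (congrArg (a + ·) hj.symm).trans (Nat.add_sub_cancel' hle)⟩
  calc modEqAtTop d a = atTop ⊓ 𝓟 (Set.Ici a) ⊓ 𝓟 {N | N ≡ a [MOD d]} := by
        rw [inf_of_le_left (le_principal_iff.mpr (Ici_mem_atTop a)), modEqAtTop]
    _ = atTop ⊓ 𝓟 (Set.range fun j ↦ a + d * j) := by rw [inf_assoc, inf_principal, hrange]
    _ = map (fun j ↦ a + d * j) atTop := by rw [← map_comap, hcomap]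

theorem tendsto_modEqAtTop_iff {α : Type*} {d : ℕ} (hd : 0 < d) (a : ℕ) {f : ℕ → α}
    {l : Filter α} :
    Tendsto f (modEqAtTop d a) l ↔ Tendsto (fun j ↦ f (a + d * j)) atTop l := by
  rw [modEqAtTop_eq_map hd, tendsto_map'_iff, Function.comp_def]

theorem tendsto_log_div_of_tendsto_succ_div {u : ℕ → ℝ} {c : ℝ} (hu : ∀ n, u n ≠ 0) (hc : c ≠ 0)
    (h : Tendsto (fun n ↦ u (n + 1) / u n) atTop (𝓝 c)) :
    Tendsto (fun n : ℕ ↦ log (u n) / n) atTop (𝓝 (log c)) := by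
  have htelescope (n : ℕ) :
      ∑ i ∈ Finset.range n, log (u (i + 1) / u i) = log (u n) - log (u 0) := by
    simp only [log_div (hu _) (hu _)]
    exact Finset.sum_range_sub (fun i ↦ log (u i)) n
  have hmean : Tendsto (fun n : ℕ ↦ (n : ℝ)⁻¹ * (log (u n) - log (u 0))) atTop (𝓝 (log c)) := by
    simpa only [htelescope] using (h.log hc).cesaro
  have hinit : Tendsto (fun n : ℕ ↦ log (u 0) / n) atTop (𝓝 0) :=
    tendsto_const_div_atTop_nhds_zero_nat _
  have hsum := hmean.add hinit
  rw [add_zero] at hsum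
  exact hsum.congr fun n ↦ by ring

theorem tendsto_log_div_modEqAtTop {f : ℕ → ℝ} {c : ℝ} {d : ℕ} (hd : 0 < d) (a : ℕ)
    (hf : ∀ N, f N ≠ 0) (hc : c ≠ 0)
    (h : Tendsto (fun N ↦ f (N + d) / f N) (modEqAtTop d a) (𝓝 c)) :
    Tendsto (fun N : ℕ ↦ log (f N) / N) (modEqAtTop d a) (𝓝 (log c / d)) := by
  rw [tendsto_modEqAtTop_iff hd] at h ⊢
  have hlog : Tendsto (fun j : ℕ ↦ log (f (a + d * j)) / j) atTop (𝓝 (log c)) :=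
    tendsto_log_div_of_tendsto_succ_div (fun _ ↦ hf _) hc <| by
      simpa only [mul_add_one, ← add_assoc] using h
  have hindex : Tendsto (fun j : ℕ ↦ (j : ℝ) / (a + d * j)) atTop (𝓝 (1 / d)) := by
    simpa only [zero_add, one_mul] using
      tendsto_add_mul_div_add_mul_atTop_nhds (0 : ℝ) a 1 (Nat.cast_ne_zero.mpr hd.ne')
  have hprod := hlog.mul hindex
  rw [mul_one_div] at hprod
  refine hprod.congr' ?_
  filter_upwards [eventually_ne_atTop 0] with j hj
  rw [div_mul_div_cancel₀ (Nat.cast_ne_zero.mpr hj), Nat.cast_add, Nat.cast_mul]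

theorem C0_pos (N m : ℕ) : 0 < C0 N m := by
  unfold C0
  positivity

theorem C0_add_two_mul (m j : ℕ) :
    C0 (m + 2 * j) m = 2 ^ (j + 2) * (2 * m + 3 * j - 1).factorial * (2 * m - 3).factorial /
      ((j + 1).factorial * (2 * m + 2 * j).factorial * (m - 2).factorial ^ 2) := by
  have hj : (m + 2 * j - m) / 2 = j := by omega
  rw [C0, hj]

theorem C0_add_two_div_C0 {m : ℕ} (hm : 0 < m) (j : ℕ) :
    C0 (m + 2 * j + 2) m / C0 (m + 2 * j) m =
      2 * ((2 * m + 3 * j) / (2 + j)) * ((2 * m + 1 + 3 * j) / (2 * m + 1 + 2 * j)) *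
        ((2 * m + 2 + 3 * j) / (2 * m + 2 + 2 * j)) := by
  obtain ⟨n, hn⟩ : ∃ n, 2 * m + 3 * j = n + 1 := ⟨2 * m + 3 * j - 1, by omega⟩
  have hn_cast : (2 * m + 3 * j : ℝ) = n + 1 := by exact_mod_cast hn
  have hnum : 2 * m + 3 * (j + 1) - 1 = n + 3 := by omega
  have hden : 2 * m + 2 * (j + 1) = 2 * m + 2 * j + 2 := by ring
  rw [add_assoc m, ← mul_add_one, C0_add_two_mul, C0_add_two_mul, hnum, hden, hn,
    Nat.add_sub_cancel, add_right_comm (2 * m : ℝ) 1 (3 * j), add_right_comm (2 * m : ℝ) 2 (3 * j),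
    hn_cast]
  simp only [Nat.factorial_succ, pow_succ]
  push_cast
  field_simp
  ring

theorem tendsto_C0_add_two_div_C0 {m : ℕ} (hm : 0 < m) :
    Tendsto (fun N ↦ C0 (N + 2) m / C0 N m) (modEqAtTop 2 m) (𝓝 (27 / 2)) := by
  rw [tendsto_modEqAtTop_iff two_pos]
  simp only [C0_add_two_div_C0 hm]
  have hfirst : Tendsto (fun j : ℕ ↦ (2 * m + 3 * j : ℝ) / (2 + j)) atTop (𝓝 3) := by
    simpa only [one_mul, div_one] using
      tendsto_add_mul_div_add_mul_atTop_nhds (2 * m : ℝ) 2 3 one_ne_zero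
  have hother (b : ℝ) : Tendsto (fun j : ℕ ↦ (b + 3 * j) / (b + 2 * j)) atTop (𝓝 (3 / 2)) :=
    tendsto_add_mul_div_add_mul_atTop_nhds b b 3 two_ne_zero
  convert ((hfirst.const_mul 2).mul (hother (2 * m + 1))).mul (hother (2 * m + 2)) using 2
  norm_num

theorem half_mul_log_eq_log_three_mul_sqrt :
    (1 / 2 : ℝ) * log (27 / 2) = log (3 * √(3 / 2)) := by
  have hsq : (27 / 2 : ℝ) = (3 * √(3 / 2)) ^ 2 := by
    rw [mul_pow, sq_sqrt (by norm_num)]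
    norm_num
  rw [hsq, log_pow, Nat.cast_ofNat, ← mul_assoc, one_div_mul_cancel two_ne_zero, one_mul]

theorem C0_growth_rate_general (m : ℕ) (h2 : 2 ≤ m) :
    Tendsto (fun N : ℕ ↦ C0 (N + 2) m / C0 N m) (modEqAtTop 2 m) (𝓝 (27 / 2)) ∧
    Tendsto (fun N : ℕ ↦ (1 / (N : ℝ)) * log (C0 N m)) (modEqAtTop 2 m)
      (𝓝 ((1 / 2) * log (27 / 2))) ∧
    (1 / 2 : ℝ) * log (27 / 2) = log (3 * √(3 / 2)) := by
  have hratio := tendsto_C0_add_two_div_C0 (m := m) (by omega)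
  have hlog := tendsto_log_div_modEqAtTop two_pos m (fun N ↦ (C0_pos N m).ne') (by norm_num) hratio
  refine ⟨hratio, ?_, half_mul_log_eq_log_three_mul_sqrt⟩
  simpa only [one_div_mul_eq_div, Nat.cast_ofNat] using hlog

/-- For fixed even m ≥ 2: C₀(N+2,m)/C₀(N,m) → 27/2 and (1/N) log C₀(N,m) → (1/2) log(27/2)
along even N → ∞. -/
theorem C0_growth_rate (m : ℕ) (hm : Even m) (h2 : 2 ≤ m) :
    Filter.Tendsto (fun N : ℕ => C0 (N + 2) m / C0 N m) evenAtTop (nhds (27 / 2 : ℝ)) ∧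
    Filter.Tendsto (fun N : ℕ => (1 / (N : ℝ)) * Real.log (C0 N m)) evenAtTop
      (nhds ((1 / 2) * Real.log (27 / 2))) ∧
    (1 / 2 : ℝ) * Real.log (27 / 2) = Real.log (3 * Real.sqrt (3 / 2)) := by
  rw [evenAtTop_eq_modEqAtTop hm]
  exact C0_growth_rate_general m h2
end

section
/- Free energy, one-phase region: if μ₁ > log 6 then the free energy F = lim_{N→∞, N even} (1/N)·log Z_{0,N}(μ₁) exists and equals −(3/2)·μ₁ + (1/2)·log(27/2), where Z_{0,N}(μ₁) = exp(−3μ₁N/2) · Σ_{m even, 2 ≤ m ≤ N} exp(−μ₁ m/2)·C₀(N,m). -/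
open Filter Real MeasureTheory

/-- The partition function Z_{0,N}(μ₁) = exp(-3μ₁N/2) Σ_{m even, 2 ≤ m ≤ N} exp(-μ₁m/2) C₀(N,m). -/
noncomputable def Z (μ₁ : ℝ) (N : ℕ) : ℝ :=
  Real.exp (-3 * μ₁ * N / 2) *
    ∑ m ∈ (Finset.range (N + 1)).filter (fun m => Even m ∧ 2 ≤ m),
      Real.exp (-μ₁ * m / 2) * C0 N m

/-!
Writing `C₀` as a product of binomial coefficients and comparing `(2m + 3j).choose j` with a single
term of `(1 + 2) ^ (2m + 3j)` gives `C₀(m + 2j, m) ≤ 9 ^ m * (27 / 2) ^ j`. Since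
`9 = √6 * √(27 / 2)`, a weight `exp (-μ₁ / 2) ≤ 1 / √6` per boundary edge brings every term of the
sum down to at most `√(27 / 2) ^ N`. The single term `m = 2` already attains this exponential rate,
up to a power of `N`, and such powers do not affect the limit of `(1 / N) * log Z`.
-/

section ExponentialGrowth

open Topology

lemma tendsto_log_const_mul_zpow_mul_pow_div {c r : ℝ} (hc : c ≠ 0) (hr : r ≠ 0) (s : ℤ) :
    Tendsto (fun n : ℕ => log (c * (n : ℝ) ^ s * r ^ n) / n) atTop (𝓝 (log r)) := by
  have log_cast_div : Tendsto (fun n : ℕ => log n / (n : ℝ)) atTop (𝓝 0) :=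
    isLittleO_log_id_atTop.tendsto_div_nhds_zero.comp tendsto_natCast_atTop_atTop
  have expansion : Tendsto (fun n : ℕ => log c / (n : ℝ) + s * (log n / n) + log r)
      atTop (𝓝 (log r)) := by
    simpa using ((tendsto_const_div_atTop_nhds_zero_nat (log c)).add
      (log_cast_div.const_mul (s : ℝ))).add_const (log r)
  refine expansion.congr' ?_
  filter_upwards [eventually_ne_atTop 0] with n hn
  have hn' : (n : ℝ) ≠ 0 := Nat.cast_ne_zero.2 hn
  rw [log_mul (mul_ne_zero hc (zpow_ne_zero s hn')) (pow_ne_zero n hr),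
    log_mul hc (zpow_ne_zero s hn'), log_zpow, log_pow]
  field_simp

lemma tendsto_log_div_of_le_of_le {l : Filter ℕ} (hl : l ≤ atTop) {a : ℕ → ℝ} {c C r : ℝ}
    {s t : ℤ} (hc : 0 < c) (hC : C ≠ 0) (hr : 0 < r)
    (lower : ∀ᶠ n : ℕ in l, c * (n : ℝ) ^ s * r ^ n ≤ a n)
    (upper : ∀ᶠ n : ℕ in l, a n ≤ C * (n : ℝ) ^ t * r ^ n) :
    Tendsto (fun n : ℕ => log (a n) / n) l (𝓝 (log r)) := by
  have lower_pos : ∀ᶠ n : ℕ in l, 0 < c * (n : ℝ) ^ s * r ^ n := by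
    filter_upwards [hl (eventually_gt_atTop 0)] with n hn
    have : (0 : ℝ) < n := Nat.cast_pos.2 hn
    positivity
  refine tendsto_of_tendsto_of_tendsto_of_le_of_le'
    ((tendsto_log_const_mul_zpow_mul_pow_div hc.ne' hr.ne' s).mono_left hl)
    ((tendsto_log_const_mul_zpow_mul_pow_div hC hr.ne' t).mono_left hl) ?_ ?_
  · filter_upwards [lower_pos, lower] with n hpos hle
    gcongr
  · filter_upwards [lower_pos, lower, upper] with n hpos hle hge
    have := hpos.trans_le hle
    gcongr

end ExponentialGrowth

section Binomial

lemma pow_mul_pow_mul_choose_le_add_pow {R : Type*} [CommSemiring R] [PartialOrder R]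
    [IsOrderedRing R] {x y : R} (hx : 0 ≤ x) (hy : 0 ≤ y) {n k : ℕ} (hk : k ≤ n) :
    x ^ k * y ^ (n - k) * n.choose k ≤ (x + y) ^ n := by
  rw [add_pow]
  exact Finset.single_le_sum (f := fun i => x ^ i * y ^ (n - i) * (n.choose i : R))
    (fun i _ => by positivity) (Finset.mem_range_succ_iff.2 hk)

lemma choose_three_mul_succ_mul (k : ℕ) :
    ((3 * (k + 1)).choose (k + 1) : ℝ) * (2 * (k + 1) * (2 * k + 1)) =
      (3 * k).choose k * (3 * (3 * k + 1) * (3 * k + 2)) := by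
  rw [Nat.cast_choose ℝ (by lia : k + 1 ≤ 3 * (k + 1)), Nat.cast_choose ℝ (by lia : k ≤ 3 * k),
    show 3 * (k + 1) - (k + 1) = 2 * k + 1 + 1 by lia, show 3 * k - k = 2 * k by lia,
    show 3 * (k + 1) = 3 * k + 1 + 1 + 1 by lia]
  simp only [Nat.factorial_succ]
  push_cast
  field_simp
  ring

lemma pow_le_mul_choose_three_mul (k : ℕ) :
    (27 / 4 : ℝ) ^ k ≤ (3 * k + 1) * (3 * k).choose k := by
  induction k with
  | zero => simp
  | succ k ih =>
    have hpos : (0 : ℝ) < 2 * (k + 1) * (2 * k + 1) := by positivity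
    refine le_of_mul_le_mul_right ?_ hpos
    calc (27 / 4 : ℝ) ^ (k + 1) * (2 * (k + 1) * (2 * k + 1))
        = (27 / 4) ^ k * (27 / 4 * (2 * (k + 1) * (2 * k + 1))) := by ring
      _ ≤ (3 * k + 1) * (3 * k).choose k * ((3 * k + 4) * (3 * (3 * k + 2))) := by
        gcongr ?_ * ?_
        nlinarith
      _ = (3 * k + 4) * ((3 * k).choose k * (3 * (3 * k + 1) * (3 * k + 2))) := by ring
      _ = (3 * (k + 1 : ℕ) + 1) * (3 * (k + 1)).choose (k + 1) * (2 * (k + 1) * (2 * k + 1)) := by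
        rw [← choose_three_mul_succ_mul]
        push_cast
        ring

lemma two_pow_mul_choose_le (n j : ℕ) :
    (2 : ℝ) ^ j * (n + 3 * j).choose j ≤ (3 / 2) ^ n * (27 / 2) ^ j := by
  have single_term : (1 / 3 : ℝ) ^ j * (2 / 3) ^ (n + 2 * j) * (n + 3 * j).choose j ≤ 1 := by
    have h := pow_mul_pow_mul_choose_le_add_pow (x := (1 / 3 : ℝ)) (y := 2 / 3) (by norm_num)
      (by norm_num) (by lia : j ≤ n + 3 * j)
    rwa [show n + 3 * j - j = n + 2 * j by lia, show (1 / 3 + 2 / 3 : ℝ) = 1 by norm_num,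
      one_pow] at h
  calc (2 : ℝ) ^ j * (n + 3 * j).choose j
      = (3 / 2) ^ n * (27 / 2) ^ j *
          ((1 / 3 : ℝ) ^ j * (2 / 3) ^ (n + 2 * j) * (n + 3 * j).choose j) := by
        have hn : (3 / 2 : ℝ) ^ n * (2 / 3) ^ n = 1 := by rw [← mul_pow]; norm_num
        have hj : (27 / 2 : ℝ) ^ j * (1 / 3) ^ j * ((2 / 3) ^ 2) ^ j = 2 ^ j := by
          rw [← mul_pow, ← mul_pow]; norm_num
        rw [← hj, pow_add, pow_mul]
        linear_combination
          -((27 / 2 : ℝ) ^ j * (1 / 3) ^ j * ((2 / 3) ^ 2) ^ j * (n + 3 * j).choose j) * hn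
    _ ≤ (3 / 2) ^ n * (27 / 2) ^ j := mul_le_of_le_one_right (by positivity) single_term

end Binomial

section Quasitriangulations

lemma C0_nonneg (N m : ℕ) : 0 ≤ C0 N m := by
  unfold C0
  positivity

lemma C0_eq_centralBinom_mul_choose (q j : ℕ) :
    C0 (q + 2 + 2 * j) (q + 2) =
      2 ^ (j + 2) * (2 * q + 1) * q.centralBinom * (2 * q + 4 + 3 * j).choose j /
        ((j + 1) * (2 * q + 4 + 3 * j)) := by
  rw [C0, show (q + 2 + 2 * j - (q + 2)) / 2 = j by lia,
    show 2 * (q + 2) + 3 * j - 1 = 2 * q + 3 + 3 * j by lia,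
    show 2 * (q + 2) - 3 = 2 * q + 1 by lia, show q + 2 - 2 = q by lia,
    show 2 * (q + 2) + 2 * j = 2 * q + 4 + 2 * j by lia, Nat.centralBinom,
    Nat.cast_choose ℝ (by lia : q ≤ 2 * q), show 2 * q - q = q by lia,
    Nat.cast_choose ℝ (by lia : j ≤ 2 * q + 4 + 3 * j),
    show 2 * q + 4 + 3 * j - j = 2 * q + 4 + 2 * j by lia,
    show 2 * q + 4 + 3 * j = 2 * q + 3 + 3 * j + 1 by lia]
  simp only [Nat.factorial_succ (2 * q + 3 + 3 * j), Nat.factorial_succ (2 * q),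
    Nat.factorial_succ j]
  push_cast
  field_simp
  ring

lemma C0_le {m : ℕ} (hm : 2 ≤ m) (j : ℕ) : C0 (m + 2 * j) m ≤ 9 ^ m * (27 / 2) ^ j := by
  obtain ⟨q, rfl⟩ := Nat.exists_eq_add_of_le' hm
  have centralBinom_le : (q.centralBinom : ℝ) ≤ 4 ^ q := mod_cast Nat.centralBinom_le_four_pow q
  have choose_le := two_pow_mul_choose_le (2 * q + 4) j
  have fraction_le : (2 * q + 1 : ℝ) / ((j + 1) * (2 * q + 4 + 3 * j)) ≤ 1 := by
    rw [div_le_one (by positivity)]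
    have : (0 : ℝ) ≤ j := Nat.cast_nonneg j
    calc (2 * q + 1 : ℝ) ≤ 2 * q + 4 + 3 * j := by linarith
      _ ≤ (j + 1) * (2 * q + 4 + 3 * j) := le_mul_of_one_le_left (by positivity) (by linarith)
  calc C0 (q + 2 + 2 * j) (q + 2)
      = 4 * q.centralBinom * (2 ^ j * (2 * q + 4 + 3 * j).choose j) *
          ((2 * q + 1) / ((j + 1) * (2 * q + 4 + 3 * j))) := by
        rw [C0_eq_centralBinom_mul_choose]
        ring
    _ ≤ 4 * 4 ^ q * ((3 / 2) ^ (2 * q + 4) * (27 / 2) ^ j) * 1 := by gcongr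
    _ = 9 ^ (q + 2) * (27 / 2) ^ j / 4 := by
        have : (9 : ℝ) ^ q = 4 ^ q * ((3 / 2) ^ 2) ^ q := by rw [← mul_pow]; norm_num
        rw [pow_add, pow_add, pow_mul, this]
        ring
    _ ≤ 9 ^ (q + 2) * (27 / 2) ^ j := div_le_self (by positivity) (by norm_num)

lemma le_C0_two {k : ℕ} (hk : k ≠ 0) : (27 / 2 : ℝ) ^ k / (48 * k ^ 3) ≤ C0 (2 * k) 2 := by
  obtain ⟨j, rfl⟩ := Nat.exists_eq_succ_of_ne_zero hk
  have choose_ge : (27 / 4 : ℝ) ^ j ≤ (3 * j + 1) * (4 + 3 * j).choose j := by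
    refine (pow_le_mul_choose_three_mul j).trans ?_
    gcongr
    lia
  have cubic_le : ((3 * j + 1) * ((j + 1) * (4 + 3 * j)) : ℝ) * (27 / 2) ≤
      4 * (48 * (j + 1) ^ 3) := by
    have : (0 : ℝ) ≤ j := Nat.cast_nonneg j
    calc ((3 * j + 1) * ((j + 1) * (4 + 3 * j)) : ℝ) * (27 / 2)
        ≤ 3 * (j + 1) * ((j + 1) * (4 * (j + 1))) * (27 / 2) := by gcongr <;> linarith
      _ = 162 * (j + 1) ^ 3 := by ring
      _ ≤ 192 * (j + 1) ^ 3 := by gcongr; norm_num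
      _ = 4 * (48 * (j + 1) ^ 3) := by ring
  have formula : C0 (2 * (j + 1)) 2 =
      2 ^ j * (4 + 3 * j).choose j * 4 / ((j + 1) * (4 + 3 * j)) := by
    rw [show 2 * (j + 1) = 0 + 2 + 2 * j by lia, C0_eq_centralBinom_mul_choose]
    simp only [Nat.centralBinom_zero, CharP.cast_eq_zero, mul_zero, zero_add, Nat.cast_one, mul_one]
    ring
  rw [Nat.succ_eq_add_one, formula, div_le_div_iff₀ (by positivity) (by positivity)]
  have : (27 / 2 : ℝ) ^ j = 2 ^ j * (27 / 4) ^ j := by rw [← mul_pow]; norm_num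
  calc (27 / 2 : ℝ) ^ (j + 1) * ((j + 1) * (4 + 3 * j))
      = 2 ^ j * (27 / 4) ^ j * (27 / 2 * ((j + 1) * (4 + 3 * j))) := by rw [pow_succ, this]; ring
    _ ≤ 2 ^ j * ((3 * j + 1) * (4 + 3 * j).choose j) * (27 / 2 * ((j + 1) * (4 + 3 * j))) := by
      gcongr
    _ = 2 ^ j * (4 + 3 * j).choose j * ((3 * j + 1) * ((j + 1) * (4 + 3 * j)) * (27 / 2)) := by ring
    _ ≤ 2 ^ j * (4 + 3 * j).choose j * (4 * (48 * (j + 1) ^ 3)) := by gcongr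
    _ = 2 ^ j * (4 + 3 * j).choose j * 4 * (48 * (j + 1 : ℕ) ^ 3) := by push_cast; ring

end Quasitriangulations

section PartitionFunction

variable {μ : ℝ} {N m : ℕ}

lemma exp_neg_half_le_inv_sqrt (hμ : log 6 ≤ μ) : exp (-μ / 2) ≤ (√6)⁻¹ := by
  rw [← exp_log (show (0 : ℝ) < (√6)⁻¹ by positivity), log_inv, log_sqrt (by norm_num)]
  gcongr
  linarith

lemma exp_mul_C0_le (hμ : log 6 ≤ μ) (hm : 2 ≤ m) (j : ℕ) :
    exp (-μ * m / 2) * C0 (m + 2 * j) m ≤ √(27 / 2) ^ (m + 2 * j) := by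
  have nine_eq : (√6)⁻¹ * 9 = √(27 / 2) := by
    rw [inv_mul_eq_iff_eq_mul₀ (by positivity), ← sqrt_mul (by norm_num)]
    norm_num
  calc exp (-μ * m / 2) * C0 (m + 2 * j) m
      = exp (-μ / 2) ^ m * C0 (m + 2 * j) m := by rw [← exp_nat_mul]; ring_nf
    _ ≤ (√6)⁻¹ ^ m * (9 ^ m * (27 / 2) ^ j) := by
      gcongr
      · exact C0_nonneg _ _
      · exact exp_neg_half_le_inv_sqrt hμ
      · exact C0_le hm j
    _ = √(27 / 2) ^ (m + 2 * j) := by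
      rw [← mul_assoc, ← mul_pow, nine_eq, pow_add, pow_mul, sq_sqrt (by norm_num)]

/-- The exponential growth rate of `Z μ N` in the one-phase region: `exp (-3 * μ / 2)` from the
bulk of the triangulation times `√(27 / 2)` from the number of configurations. -/
noncomputable def growthRate (μ : ℝ) : ℝ := exp (-3 * μ / 2) * √(27 / 2)

lemma growthRate_pos (μ : ℝ) : 0 < growthRate μ := by
  unfold growthRate
  positivity

lemma log_growthRate (μ : ℝ) :
    log (growthRate μ) = -(3 / 2) * μ + (1 / 2) * log (27 / 2) := by
  rw [growthRate, log_mul (exp_ne_zero _) (by positivity), log_exp, log_sqrt (by norm_num)]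
  ring

lemma exp_mul_sqrt_pow_eq_growthRate_pow (μ : ℝ) (N : ℕ) :
    exp (-3 * μ * N / 2) * √(27 / 2) ^ N = growthRate μ ^ N := by
  rw [growthRate, mul_pow, ← exp_nat_mul]
  ring_nf

lemma Z_le_mul_growthRate_pow (hμ : log 6 ≤ μ) (hN : Even N) : Z μ N ≤ N * growthRate μ ^ N := by
  set boundaryLengths := (Finset.range (N + 1)).filter fun m => Even m ∧ 2 ≤ m with hB
  have card_le : boundaryLengths.card ≤ N := by
    have subset : boundaryLengths ⊆ Finset.Icc 1 N := fun m hm => by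
      rw [hB, Finset.mem_filter, Finset.mem_range] at hm
      exact Finset.mem_Icc.2 (by lia)
    simpa using Finset.card_le_card subset
  have term_le : ∀ m ∈ boundaryLengths, exp (-μ * m / 2) * C0 N m ≤ √(27 / 2) ^ N := by
    intro m hm
    rw [hB, Finset.mem_filter, Finset.mem_range] at hm
    obtain ⟨hmN, hm_even, hm2⟩ := hm
    obtain ⟨j, hj⟩ := (Nat.even_sub (by lia)).2 (iff_of_true hN hm_even)
    obtain rfl : N = m + 2 * j := by lia
    exact exp_mul_C0_le hμ hm2 j
  calc Z μ N
      ≤ exp (-3 * μ * N / 2) * (boundaryLengths.card • √(27 / 2) ^ N) := by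
        rw [Z]
        gcongr
        exact Finset.sum_le_card_nsmul _ _ _ term_le
    _ ≤ exp (-3 * μ * N / 2) * (N * √(27 / 2) ^ N) := by
        rw [nsmul_eq_mul]
        gcongr
    _ = N * growthRate μ ^ N := by
        rw [← exp_mul_sqrt_pow_eq_growthRate_pow]
        ring

lemma mul_growthRate_pow_le_Z (μ : ℝ) (hN : Even N) (hN0 : N ≠ 0) :
    exp (-μ) / 6 * (N : ℝ) ^ (-3 : ℤ) * growthRate μ ^ N ≤ Z μ N := by
  obtain ⟨k, rfl⟩ := hN.exists_two_nsmul
  have hk : k ≠ 0 := by lia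
  have C0_two_ge : √(27 / 2) ^ (2 * k) / (6 * ((2 * k : ℕ) : ℝ) ^ 3) ≤ C0 (2 * k) 2 := by
    refine le_of_eq_of_le ?_ (le_C0_two hk)
    rw [pow_mul, sq_sqrt (by norm_num)]
    push_cast
    ring
  calc exp (-μ) / 6 * ((2 * k : ℕ) : ℝ) ^ (-3 : ℤ) * growthRate μ ^ (2 * k)
      = exp (-3 * μ * (2 * k : ℕ) / 2) *
          (exp (-μ) * (√(27 / 2) ^ (2 * k) / (6 * ((2 * k : ℕ) : ℝ) ^ 3))) := by
        rw [← exp_mul_sqrt_pow_eq_growthRate_pow, zpow_neg, zpow_ofNat]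
        ring
    _ ≤ exp (-3 * μ * (2 * k : ℕ) / 2) * (exp (-μ * (2 : ℕ) / 2) * C0 (2 * k) 2) := by
        rw [show -μ * ((2 : ℕ) : ℝ) / 2 = -μ by push_cast; ring]
        gcongr
    _ ≤ Z μ (2 * k) := by
        rw [Z]
        gcongr
        exact Finset.single_le_sum (f := fun m : ℕ => exp (-μ * m / 2) * C0 (2 * k) m)
          (fun m _ => mul_nonneg (exp_nonneg _) (C0_nonneg _ _))
          (Finset.mem_filter.2 ⟨Finset.mem_range.2 (by lia), even_two, le_rfl⟩)

end PartitionFunction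

theorem free_energy_subcritical_general (μ₁ : ℝ) (hμ : Real.log 6 ≤ μ₁) :
    Filter.Tendsto (fun N : ℕ => (1 / (N : ℝ)) * Real.log (Z μ₁ N)) evenAtTop
      (nhds (-(3 / 2) * μ₁ + (1 / 2) * Real.log (27 / 2))) := by
  have le_atTop : evenAtTop ≤ atTop := inf_le_left
  have eventually_even : ∀ᶠ N in evenAtTop, Even N := mem_inf_of_right (mem_principal_self _)
  have lower : ∀ᶠ N : ℕ in evenAtTop,
      exp (-μ₁) / 6 * (N : ℝ) ^ (-3 : ℤ) * growthRate μ₁ ^ N ≤ Z μ₁ N := by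
    filter_upwards [eventually_even, le_atTop (eventually_ne_atTop 0)] with N hN hN0
    exact mul_growthRate_pow_le_Z μ₁ hN hN0
  have upper : ∀ᶠ N : ℕ in evenAtTop, Z μ₁ N ≤ 1 * (N : ℝ) ^ (1 : ℤ) * growthRate μ₁ ^ N := by
    filter_upwards [eventually_even] with N hN
    simpa using Z_le_mul_growthRate_pow hμ hN
  rw [← log_growthRate]
  simp only [one_div_mul_eq_div]
  exact tendsto_log_div_of_le_of_le le_atTop (by positivity) one_ne_zero (growthRate_pos μ₁)
    lower upper

/-- Free energy in the one-phase (subcritical) region μ₁ > log 6. -/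
theorem free_energy_subcritical (μ₁ : ℝ) (hμ : Real.log 6 < μ₁) :
    Filter.Tendsto (fun N : ℕ => (1 / (N : ℝ)) * Real.log (Z μ₁ N)) evenAtTop
      (nhds (-(3 / 2) * μ₁ + (1 / 2) * Real.log (27 / 2))) :=
  free_energy_subcritical_general μ₁ hμ.le
end

section
/- Subcritical phase (m(N) = O(1)): if μ₁ > log 6 then for every even m ≥ 2 the limit p_m = lim_{N→∞, N even} P_{N,μ₁}(m) exists, each p_m > 0, and Σ_{m even, m ≥ 2} p_m = 1; i.e. the boundary-length distribution converges to a probability distribution on the even integers ≥ 2. -/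
open Filter Real MeasureTheory

/-- Weight of boundary length m: w_{μ₁}(N,m) = exp(-μ₁ m/2) C₀(N,m). -/
noncomputable def w (μ₁ : ℝ) (N m : ℕ) : ℝ := Real.exp (-μ₁ * m / 2) * C0 N m

/-- Normalizing constant Θ_N(μ₁) = Σ_{m even, 2 ≤ m ≤ N} w_{μ₁}(N,m). -/
noncomputable def Θ (μ₁ : ℝ) (N : ℕ) : ℝ :=
  ∑ m ∈ (Finset.range (N + 1)).filter (fun m => Even m ∧ 2 ≤ m), w μ₁ N m

/-- Boundary-length distribution P_{N,μ₁}(m) = w_{μ₁}(N,m)/Θ_N(μ₁). -/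
noncomputable def P (μ₁ : ℝ) (N m : ℕ) : ℝ := w μ₁ N m / Θ μ₁ N

/-!
`C₀(N, m)` splits into a factor depending on `m` alone and a bulk factor. Raising `m` by two
multiplies the bulk factor by `(3N + m)(N - m + 2) / (8(N + m + 1)(N + m + 2))`, which is at most
`3/8` and tends to `3/8` as `N → ∞`. Hence the suitably normalized weight of `m` is dominated by,
and converges to, `exp(-μ₁ m / 2) (2m - 3)! / (m - 2)!² (3/8)^(m/2)`. Since
`(2n + 1)! / n!² = (n + 1) * choose (2n + 1) n ≤ (n + 1) 4ⁿ`, this is summable over even `m` as soon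
as `6 exp(-μ₁) < 1`, and Tannery's theorem gives the limit of the normalizing constant.
-/

open scoped Nat Topology

lemma tendsto_sum_of_dominated_convergence {α β G : Type*} {𝓕 : Filter α}
    [NormedAddCommGroup G] [CompleteSpace G] {s : α → Finset β} {f : α → β → G} {g : β → G}
    {bound : β → ℝ} (hs : Tendsto s 𝓕 atTop) (h_sum : Summable bound)
    (h_lim : ∀ k, Tendsto (f · k) 𝓕 (𝓝 (g k)))
    (h_bound : ∀ᶠ a in 𝓕, ∀ k ∈ s a, ‖f a k‖ ≤ bound k) :
    Tendsto (fun a ↦ ∑ k ∈ s a, f a k) 𝓕 (𝓝 (∑' k, g k)) := by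
  rcases 𝓕.eq_or_neBot with rfl | _
  · exact tendsto_bot
  have eventually_mem (k : β) : ∀ᶠ a in 𝓕, k ∈ s a :=
    (hs.eventually_ge_atTop {k}).mono fun _ ↦ Finset.singleton_subset_iff.mp
  have bound_nonneg (k : β) : 0 ≤ bound k := by
    obtain ⟨a, hk, ha⟩ := ((eventually_mem k).and h_bound).exists
    exact (norm_nonneg _).trans (ha k hk)
  have sum_eq_tsum (a : α) : ∑ k ∈ s a, f a k = ∑' k, (s a : Set β).indicator (f a) k :=
    sum_eq_tsum_indicator _ _
  simp only [sum_eq_tsum]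
  refine tendsto_tsum_of_dominated_convergence h_sum (fun k ↦ ?_) ?_
  · refine (h_lim k).congr' ((eventually_mem k).mono fun a hk ↦ ?_)
    exact (Set.indicator_of_mem (Finset.mem_coe.mpr hk) _).symm
  · filter_upwards [h_bound] with a ha k
    rw [norm_indicator_eq_indicator_norm]
    exact Set.indicator_apply_le' (ha k) fun _ ↦ bound_nonneg k

lemma factorial_two_mul_add_one_div_sq_le (n : ℕ) :
    ((2 * n + 1)! : ℝ) / (n ! : ℝ) ^ 2 ≤ (n + 1) * 4 ^ n := by
  have choose_mul : ((2 * n + 1).choose n * n ! * ((n + 1) * n !) : ℝ) = (2 * n + 1)! := by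
    have h := Nat.choose_mul_factorial_mul_factorial (show n ≤ 2 * n + 1 by lia)
    rw [show 2 * n + 1 - n = n + 1 by lia, Nat.factorial_succ n] at h
    exact_mod_cast h
  have choose_le : ((2 * n + 1).choose n : ℝ) ≤ 4 ^ n := by
    exact_mod_cast Nat.choose_middle_le_pow n
  calc ((2 * n + 1)! : ℝ) / (n ! : ℝ) ^ 2 = (n + 1) * (2 * n + 1).choose n := by
        rw [← choose_mul]
        field_simp
    _ ≤ (n + 1) * 4 ^ n := by gcongr

/-- The factor `(2m - 3)! / (m - 2)!²` of `C0 N m`, which does not depend on the number of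
triangles. It is meaningful for `2 ≤ m`; below that the subtractions truncate. -/
noncomputable def boundaryFactor (m : ℕ) : ℝ := (2 * m - 3)! / ((m - 2)! : ℝ) ^ 2

/-- The factor `2 ^ (j + 2) (2m + 3j - 1)! / ((j + 1)! (2m + 2j)!)`, `j = (N - m) / 2`, of `C0 N m`.
It makes sense for `m = 0` as well, and `bulkFactor N 0` serves to normalize the weights. -/
noncomputable def bulkFactor (N m : ℕ) : ℝ :=
  2 ^ ((N - m) / 2 + 2) * (2 * m + 3 * ((N - m) / 2) - 1)! /
    (((N - m) / 2 + 1)! * (2 * m + 2 * ((N - m) / 2))!)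

/-- The quotient `bulkFactor N (m + 2) / bulkFactor N m`, for `m < N` of the same parity. -/
noncomputable def bulkRatio (N m : ℕ) : ℝ :=
  (3 * N + m) * (N - m + 2) / (8 * (N + m + 1) * (N + m + 2))

lemma C0_eq_bulkFactor_mul_boundaryFactor (N m : ℕ) :
    C0 N m = bulkFactor N m * boundaryFactor m := by
  rw [C0, bulkFactor, boundaryFactor, div_mul_div_comm]

lemma boundaryFactor_pos (m : ℕ) : 0 < boundaryFactor m := by
  unfold boundaryFactor
  positivity

lemma boundaryFactor_add_two_le (n : ℕ) : boundaryFactor (n + 2) ≤ (n + 1) * 4 ^ n := by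
  rw [boundaryFactor, show 2 * (n + 2) - 3 = 2 * n + 1 by lia, Nat.add_sub_cancel]
  exact factorial_two_mul_add_one_div_sq_le n

lemma bulkFactor_pos (N m : ℕ) : 0 < bulkFactor N m := by
  unfold bulkFactor
  positivity

lemma bulkFactor_self_add_two_mul (m j : ℕ) :
    bulkFactor (m + 2 * j) m =
      2 ^ (j + 2) * (2 * m + 3 * j - 1)! / ((j + 1)! * (2 * m + 2 * j)!) := by
  rw [bulkFactor, show (m + 2 * j - m) / 2 = j by lia]

lemma bulkFactor_add_two {N m : ℕ} (hparity : N ≡ m [MOD 2]) (hm : m + 2 ≤ N) :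
    bulkFactor N (m + 2) = bulkRatio N m * bulkFactor N m := by
  obtain ⟨j, rfl⟩ : ∃ j, N = m + 2 * (j + 1) :=
    ⟨(N - m) / 2 - 1, by unfold Nat.ModEq at hparity; lia⟩
  have upper : bulkFactor (m + 2 * (j + 1)) (m + 2) =
      2 ^ (j + 2) * (2 * m + 3 * j + 2 + 1)! / ((j + 1)! * (2 * m + 2 * j + 2 + 1 + 1)!) := by
    rw [show m + 2 * (j + 1) = m + 2 + 2 * j by ring, bulkFactor_self_add_two_mul,
      show 2 * (m + 2) + 3 * j - 1 = 2 * m + 3 * j + 2 + 1 by lia,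
      show 2 * (m + 2) + 2 * j = 2 * m + 2 * j + 2 + 1 + 1 by ring]
  have lower : bulkFactor (m + 2 * (j + 1)) m =
      2 ^ (j + 1 + 2) * (2 * m + 3 * j + 2)! / ((j + 1 + 1)! * (2 * m + 2 * j + 2)!) := by
    rw [bulkFactor_self_add_two_mul, show 2 * m + 3 * (j + 1) - 1 = 2 * m + 3 * j + 2 by lia,
      show 2 * m + 2 * (j + 1) = 2 * m + 2 * j + 2 by ring]
  rw [upper, lower, bulkRatio, Nat.factorial_succ (2 * m + 3 * j + 2), Nat.factorial_succ (j + 1),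
    Nat.factorial_succ (2 * m + 2 * j + 2 + 1), Nat.factorial_succ (2 * m + 2 * j + 2),
    div_mul_div_comm, div_eq_div_iff (by positivity) (by positivity)]
  push_cast
  ring

lemma bulkRatio_le (N m : ℕ) : bulkRatio N m ≤ 3 / 8 := by
  rw [bulkRatio, div_le_div_iff₀ (by positivity) (by positivity)]
  have : (0 : ℝ) ≤ N * m := by positivity
  nlinarith [sq_nonneg (m : ℝ)]

lemma tendsto_bulkRatio (m : ℕ) : Tendsto (bulkRatio · m) atTop (𝓝 (3 / 8)) := by
  have left : Tendsto (fun N : ℕ ↦ ((m : ℝ) + 3 * N) / (8 * (m + 1) + 8 * N)) atTop (𝓝 (3 / 8)) :=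
    tendsto_add_mul_div_add_mul_atTop_nhds _ _ _ (by norm_num)
  have right : Tendsto (fun N : ℕ ↦ ((2 - m : ℝ) + 1 * N) / (m + 2 + 1 * N)) atTop (𝓝 (1 / 1)) :=
    tendsto_add_mul_div_add_mul_atTop_nhds _ _ _ one_ne_zero
  convert left.mul right using 2 with N
  · rw [bulkRatio, div_mul_div_comm]
    congr 1 <;> ring
  · norm_num

lemma bulkFactor_add_two_mul_le {N m : ℕ} (hparity : N ≡ m [MOD 2]) {k : ℕ}
    (hk : m + 2 * k ≤ N) : bulkFactor N (m + 2 * k) ≤ (3 / 8) ^ k * bulkFactor N m := by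
  induction k with
  | zero => simp
  | succ k ih =>
    have hparity' : N ≡ m + 2 * k [MOD 2] := by unfold Nat.ModEq at *; lia
    calc bulkFactor N (m + 2 * (k + 1))
        = bulkRatio N (m + 2 * k) * bulkFactor N (m + 2 * k) :=
          bulkFactor_add_two hparity' hk
      _ ≤ 3 / 8 * ((3 / 8) ^ k * bulkFactor N m) :=
          mul_le_mul (bulkRatio_le _ _) (ih (by lia)) (bulkFactor_pos _ _).le (by norm_num)
      _ = (3 / 8) ^ (k + 1) * bulkFactor N m := by ring

lemma tendsto_bulkFactor_add_two_mul_div {l : Filter ℕ} (hl : l ≤ atTop) {m : ℕ}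
    (hparity : ∀ᶠ N in l, N ≡ m [MOD 2]) (k : ℕ) :
    Tendsto (fun N ↦ bulkFactor N (m + 2 * k) / bulkFactor N m) l (𝓝 ((3 / 8) ^ k)) := by
  induction k with
  | zero => simp [(bulkFactor_pos _ _).ne', tendsto_const_nhds]
  | succ k ih =>
    rw [pow_succ']
    refine (((tendsto_bulkRatio (m + 2 * k)).mono_left hl).mul ih).congr' ?_
    filter_upwards [hparity, hl (eventually_ge_atTop (m + 2 * k + 2))] with N hN hle
    have hN' : N ≡ m + 2 * k [MOD 2] := by unfold Nat.ModEq at *; lia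
    rw [← mul_div_assoc, ← bulkFactor_add_two hN' hle]
    rfl

lemma evenAtTop_le_atTop : evenAtTop ≤ atTop := inf_le_left

lemma eventually_even_evenAtTop : ∀ᶠ N in evenAtTop, Even N :=
  mem_inf_of_right (mem_principal_self _)

lemma Θ_eq_sum_range (μ₁ : ℝ) (N : ℕ) :
    Θ μ₁ N = ∑ k ∈ Finset.range (N / 2), w μ₁ N (2 * (k + 1)) := by
  refine (Finset.sum_nbij' (fun k ↦ 2 * (k + 1)) (fun m ↦ m / 2 - 1) ?_ ?_ ?_ ?_ ?_).symm <;>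
    grind

/-- The limit of `w μ₁ N m / bulkFactor N 0` as `N → ∞`, for even `m`. -/
noncomputable def limitWeight (μ₁ : ℝ) (m : ℕ) : ℝ :=
  exp (-μ₁ * m / 2) * boundaryFactor m * (3 / 8) ^ (m / 2)

/-- The limiting boundary-length distribution, as a function of the even length `m ≥ 2`. -/
noncomputable def limitLaw (μ₁ : ℝ) (m : ℕ) : ℝ :=
  limitWeight μ₁ m / ∑' k : ℕ, limitWeight μ₁ (2 * (k + 1))

section Weights

variable (μ₁ : ℝ)

lemma limitWeight_pos (m : ℕ) : 0 < limitWeight μ₁ m := by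
  have := boundaryFactor_pos m
  unfold limitWeight
  positivity

lemma w_div_bulkFactor (N m : ℕ) :
    w μ₁ N m / bulkFactor N 0 =
      exp (-μ₁ * m / 2) * boundaryFactor m * (bulkFactor N m / bulkFactor N 0) := by
  rw [w, C0_eq_bulkFactor_mul_boundaryFactor]
  ring

lemma w_div_bulkFactor_pos (N m : ℕ) : 0 < w μ₁ N m / bulkFactor N 0 := by
  rw [w_div_bulkFactor]
  exact mul_pos (mul_pos (exp_pos _) (boundaryFactor_pos m))
    (div_pos (bulkFactor_pos N m) (bulkFactor_pos N 0))

lemma w_div_bulkFactor_le_limitWeight {N m : ℕ} (hN : Even N) (hm : Even m)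
    (hle : m ≤ N) : w μ₁ N m / bulkFactor N 0 ≤ limitWeight μ₁ m := by
  have hbulk : bulkFactor N m / bulkFactor N 0 ≤ (3 / 8) ^ (m / 2) := by
    have h := bulkFactor_add_two_mul_le (m := 0) (k := m / 2) (Nat.even_iff.mp hN) (by lia)
    rw [zero_add, Nat.two_mul_div_two_of_even hm] at h
    exact (div_le_iff₀ (bulkFactor_pos N 0)).mpr h
  have := boundaryFactor_pos m
  rw [w_div_bulkFactor, limitWeight]
  gcongr

lemma tendsto_w_div_bulkFactor {m : ℕ} (hm : Even m) :
    Tendsto (fun N ↦ w μ₁ N m / bulkFactor N 0) evenAtTop (𝓝 (limitWeight μ₁ m)) := by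
  simp only [w_div_bulkFactor]
  have h := tendsto_bulkFactor_add_two_mul_div evenAtTop_le_atTop (m := 0)
    (eventually_even_evenAtTop.mono fun _ ↦ Nat.even_iff.mp) (m / 2)
  rw [zero_add, Nat.two_mul_div_two_of_even hm] at h
  exact h.const_mul _

lemma limitWeight_two_mul_succ_le (k : ℕ) :
    limitWeight μ₁ (2 * (k + 1)) ≤ (k + 1) * (6 * exp (-μ₁)) ^ (k + 1) := by
  have hexp : exp (-μ₁ * (2 * (k + 1) : ℕ) / 2) = exp (-μ₁) ^ (k + 1) := by
    rw [← exp_nat_mul]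
    push_cast
    ring_nf
  have hboundary : boundaryFactor (2 * (k + 1)) ≤ (k + 1) * 16 ^ (k + 1) :=
    calc boundaryFactor (2 * (k + 1)) ≤ ((2 * k : ℕ) + 1) * 4 ^ (2 * k) :=
          boundaryFactor_add_two_le (2 * k)
      _ = (2 * k + 1) * 16 ^ k := by
          rw [pow_mul]
          norm_num
      _ ≤ (k + 1) * 16 * 16 ^ k := by
          gcongr
          linarith
      _ = (k + 1) * 16 ^ (k + 1) := by ring
  calc limitWeight μ₁ (2 * (k + 1))
      = exp (-μ₁) ^ (k + 1) * boundaryFactor (2 * (k + 1)) * (3 / 8) ^ (k + 1) := by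
        rw [limitWeight, hexp, Nat.mul_div_cancel_left _ two_pos]
    _ ≤ exp (-μ₁) ^ (k + 1) * ((k + 1) * 16 ^ (k + 1)) * (3 / 8) ^ (k + 1) := by gcongr
    _ = (k + 1) * (16 * (3 / 8) * exp (-μ₁)) ^ (k + 1) := by
        simp only [mul_pow]
        ring
    _ = (k + 1) * (6 * exp (-μ₁)) ^ (k + 1) := by norm_num

end Weights

section Subcritical

variable {μ₁ : ℝ}

lemma summable_limitWeight (hμ : log 6 < μ₁) :
    Summable fun k : ℕ ↦ limitWeight μ₁ (2 * (k + 1)) := by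
  have hratio : ‖6 * exp (-μ₁)‖ < 1 := by
    rw [norm_of_nonneg (by positivity), exp_neg, mul_inv_lt_iff₀ (exp_pos _), one_mul]
    exact (log_lt_iff_lt_exp (by norm_num)).mp hμ
  have hgeom : Summable fun k : ℕ ↦ ((k : ℝ) + 1) * (6 * exp (-μ₁)) ^ (k + 1) := by
    have h := summable_pow_mul_geometric_of_norm_lt_one 1 hratio
    simpa only [pow_one, Function.comp_def, Nat.succ_eq_add_one, Nat.cast_succ] using
      h.comp_injective Nat.succ_injective
  exact hgeom.of_nonneg_of_le (fun _ ↦ (limitWeight_pos _ _).le) (limitWeight_two_mul_succ_le μ₁)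

lemma tsum_limitWeight_pos (hμ : log 6 < μ₁) : 0 < ∑' k : ℕ, limitWeight μ₁ (2 * (k + 1)) :=
  (summable_limitWeight hμ).tsum_pos (fun _ ↦ (limitWeight_pos _ _).le) 0 (limitWeight_pos _ _)

lemma tendsto_Θ_div_bulkFactor (hμ : log 6 < μ₁) :
    Tendsto (fun N ↦ Θ μ₁ N / bulkFactor N 0) evenAtTop
      (𝓝 (∑' k : ℕ, limitWeight μ₁ (2 * (k + 1)))) := by
  have hrange : Tendsto (fun N ↦ Finset.range (N / 2)) evenAtTop atTop :=
    tendsto_finset_range.comp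
      ((Nat.tendsto_div_const_atTop two_ne_zero).mono_left evenAtTop_le_atTop)
  simp only [Θ_eq_sum_range, Finset.sum_div]
  refine tendsto_sum_of_dominated_convergence hrange (summable_limitWeight hμ)
    (fun k ↦ tendsto_w_div_bulkFactor μ₁ (even_two_mul _)) ?_
  filter_upwards [eventually_even_evenAtTop] with N hN k hk
  rw [norm_of_nonneg (w_div_bulkFactor_pos _ _ _).le]
  have : k < N / 2 := Finset.mem_range.mp hk
  exact w_div_bulkFactor_le_limitWeight μ₁ hN (even_two_mul _) (by lia)

lemma tendsto_P_limitLaw (hμ : log 6 < μ₁) {m : ℕ} (hm : Even m) :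
    Tendsto (fun N ↦ P μ₁ N m) evenAtTop (𝓝 (limitLaw μ₁ m)) := by
  refine ((tendsto_w_div_bulkFactor μ₁ hm).div (tendsto_Θ_div_bulkFactor hμ)
    (tsum_limitWeight_pos hμ).ne').congr fun N ↦ ?_
  exact div_div_div_cancel_right₀ (bulkFactor_pos N 0).ne' _ _

lemma limitLaw_pos (hμ : log 6 < μ₁) (m : ℕ) : 0 < limitLaw μ₁ m :=
  div_pos (limitWeight_pos _ _) (tsum_limitWeight_pos hμ)

lemma tsum_limitLaw (hμ : log 6 < μ₁) : ∑' k : ℕ, limitLaw μ₁ (2 * (k + 1)) = 1 := by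
  simp only [limitLaw]
  rw [tsum_div_const, div_self (tsum_limitWeight_pos hμ).ne']

end Subcritical

/-- Subcritical phase: the boundary-length distribution converges to a probability
distribution (p_m) on the even integers m ≥ 2, with every p_m > 0. -/
theorem subcritical_limit_law (μ₁ : ℝ) (hμ : Real.log 6 < μ₁) :
    ∃ p : ℕ → ℝ,
      (∀ m : ℕ, Even m → 2 ≤ m →
        Filter.Tendsto (fun N : ℕ => P μ₁ N m) evenAtTop (nhds (p m)) ∧ 0 < p m) ∧
      ∑' k : ℕ, p (2 * (k + 1)) = 1 := by
  exact ⟨limitLaw μ₁, fun m hm _ ↦ ⟨tendsto_P_limitLaw hμ hm, limitLaw_pos hμ m⟩, tsum_limitLaw hμ⟩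
end
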